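/- Assume V ∈ C¹(ℝ^N), c ∈ ℝ, condition (V^c) and the coercivity condition (1.7). If q ∈ ℳ_c, then J_{c,(α_q,ω_q)}(q) = m_c; moreover, if α_q ∈ ℝ then q(t) = q(α_q) for all t ≤ α_q, and if ω_q ∈ ℝ then q(t) = q(ω_q) for all t ≥ ω_q. -/

import Mathlib

open MeasureTheory Filter Metric Set Topology
open scoped ENNReal

noncomputable section

abbrev Euc (N : ℕ) := EuclideanSpace ℝ (Fin N)

def setDist {E : Type*} [PseudoMetricSpace E] (A B : Set E) : ℝ :=
  sInf ((fun p : E × E => dist p.1 p.2) '' (A ×ˢ B))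

def IsH1loc {N : ℕ} (q q' : ℝ → Euc N) : Prop :=
  LocallyIntegrable q' volume ∧
  (∀ a b : ℝ, IntegrableOn (fun t => ‖q' t‖ ^ 2) (Icc a b) volume) ∧
  (∀ a b : ℝ, q b - q a = ∫ t in a..b, q' t)

def lagJ {N : ℕ} (V : Euc N → ℝ) (c : ℝ) (q q' : ℝ → Euc N) (I : Set ℝ) : ℝ≥0∞ :=
  ∫⁻ t in I, ENNReal.ofReal (2⁻¹ * ‖q' t‖ ^ 2 + (V (q t) - c))

def Gamma {N : ℕ} (V : Euc N → ℝ) (c : ℝ) (Vm Vp : Set (Euc N)) :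
    Set ((ℝ → Euc N) × (ℝ → Euc N)) :=
  {p | IsH1loc p.1 p.2 ∧ (∀ t, c ≤ V (p.1 t)) ∧
    (∀ ε > 0, ∃ᶠ t in atBot, infDist (p.1 t) Vm < ε) ∧
    (∀ ε > 0, ∃ᶠ t in atTop, infDist (p.1 t) Vp < ε)}

def mc {N : ℕ} (V : Euc N → ℝ) (c : ℝ) (Vm Vp : Set (Euc N)) : ℝ≥0∞ :=
  ⨅ (p) (_ : p ∈ Gamma V c Vm Vp), lagJ V c p.1 p.2 univ

def Coercive {N : ℕ} (V : Euc N → ℝ) (c : ℝ) (Vm Vp : Set (Euc N)) (R : ℝ) : Prop :=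
  mc V c Vm Vp =
    ⨅ (p) (_ : p ∈ Gamma V c Vm Vp) (_ : ∀ t, ‖p.1 t‖ ≤ R), lagJ V c p.1 p.2 univ

/-- `ρ₀ := (1/4)·dist(𝒱⁻ ∩ B̄_R(0), 𝒱⁺ ∩ B̄_R(0))`. -/
def rho0 {N : ℕ} (Vm Vp : Set (Euc N)) (R : ℝ) : ℝ :=
  (1 / 4) * setDist (Vm ∩ closedBall 0 R) (Vp ∩ closedBall 0 R)

/-- membership in `ℳ_c`. -/
def MemM {N : ℕ} (V : Euc N → ℝ) (c : ℝ) (Vm Vp : Set (Euc N)) (R : ℝ)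
    (q q' : ℝ → Euc N) : Prop :=
  (q, q') ∈ Gamma V c Vm Vp ∧
  infDist (q 0) {x | V x ≤ c} = rho0 Vm Vp R ∧
  lagJ V c q q' univ = mc V c Vm Vp ∧
  (∀ t, ‖q t‖ ≤ R)

/-- `α_q` (valued in `[-∞,+∞]`, with `−∞` when `q(ℝ) ∩ 𝒱⁻ = ∅`). -/
def alphaQ {N : ℕ} (Vm : Set (Euc N)) (q : ℝ → Euc N) : EReal :=
  sSup {x : EReal | ∃ t : ℝ, x = (t : EReal) ∧ q t ∈ Vm}

/-- `ω_q` (valued in `[-∞,+∞]`, with `+∞` when there is no `t > α_q` with `q(t) ∈ 𝒱⁺`). -/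
def omegaQ {N : ℕ} (Vm Vp : Set (Euc N)) (q : ℝ → Euc N) : EReal :=
  sInf {x : EReal | ∃ t : ℝ, x = (t : EReal) ∧ alphaQ Vm q < (t : EReal) ∧ q t ∈ Vp}

/-- reflection of `q` with respect to `b` (used for `t > b`). -/
def reflPlus {N : ℕ} (q : ℝ → Euc N) (b : ℝ) : ℝ → Euc N :=
  fun t => if t ≤ b then q t else q (2 * b - t)

/-- reflection of `q` with respect to `a` (used for `t < a`). -/
def reflMinus {N : ℕ} (q : ℝ → Euc N) (a : ℝ) : ℝ → Euc N :=
  fun t => if a ≤ t then q t else q (2 * a - t)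

/-- ω-limit set `Ω_q := ⋂_{t > α_q} closure {q(s) : s ≥ t}`. -/
def omegaLimitSet {N : ℕ} (Vm : Set (Euc N)) (q : ℝ → Euc N) : Set (Euc N) :=
  ⋂ (t : ℝ) (_ : alphaQ Vm q < (t : EReal)), closure (q '' Ici t)

/-- α-limit set `𝒜_q := ⋂_{t < ω_q} closure {q(s) : s ≤ t}`. -/
def alphaLimitSet {N : ℕ} (Vm Vp : Set (Euc N)) (q : ℝ → Euc N) : Set (Euc N) :=
  ⋂ (t : ℝ) (_ : (t : EReal) < omegaQ Vm Vp q), closure (q '' Iic t)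

def glue {α : Type*} (T : ℝ) (f g : ℝ → α) : ℝ → α := fun t => if t < T then f t else g t

theorem glue_lt {α : Type*} {T t : ℝ} (f g : ℝ → α) (h : t < T) : glue T f g t = f t := by
  simp [glue, h]

theorem glue_ge {α : Type*} {T t : ℝ} (f g : ℝ → α) (h : T ≤ t) : glue T f g t = g t := by
  simp [glue, not_lt.2 h]

theorem glue_integrableOn {E : Type*} [NormedAddCommGroup E] {T : ℝ} {f g : ℝ → E} {s : Set ℝ}
    (hf : IntegrableOn f s volume) (hg : IntegrableOn g s volume) :
    IntegrableOn (glue T f g) s volume := by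
  have h : Integrable ((Iio T).piecewise f g) (volume.restrict s) :=
    Integrable.piecewise measurableSet_Iio hf.integrableOn hg.integrableOn
  have e : glue T f g = (Iio T).piecewise f g := by
    ext t
    by_cases ht : t < T <;> simp [glue, Set.piecewise, ht]
  rw [e]
  exact h

theorem IsH1loc.intInt {N : ℕ} {q q' : ℝ → Euc N} (h : IsH1loc q q') (a b : ℝ) :
    IntervalIntegrable q' volume a b :=
  (h.1.integrableOn_isCompact isCompact_uIcc).intervalIntegrable

theorem IsH1loc.continuous {N : ℕ} {q q' : ℝ → Euc N} (h : IsH1loc q q') : Continuous q := by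
  have h1 := intervalIntegral.continuous_primitive h.intInt 0
  have h2 : q = fun b => q 0 + ∫ t in (0:ℝ)..b, q' t := by
    ext1 b
    rw [← h.2.2 0 b]
    abel
  rw [h2]
  exact continuous_const.add h1

theorem IsH1loc.glue {N : ℕ} {p p' q q' : ℝ → Euc N} (hp : IsH1loc p p') (hq : IsH1loc q q')
    (T : ℝ) (hT : p T = q T) : IsH1loc (glue T p q) (glue T p' q') := by
  have h1 : LocallyIntegrable (_root_.glue T p' q') volume := by
    rw [locallyIntegrable_iff]
    intro k hk
    exact glue_integrableOn (hp.1.integrableOn_isCompact hk) (hq.1.integrableOn_isCompact hk)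
  have hi : ∀ a b, IntervalIntegrable (_root_.glue T p' q') volume a b := fun a b =>
    (h1.integrableOn_isCompact isCompact_uIcc).intervalIntegrable
  refine ⟨h1, ?_, ?_⟩
  · intro a b
    have := glue_integrableOn (T := T) (hp.2.1 a b) (hq.2.1 a b)
    convert this using 1
    ext t
    by_cases ht : t < T <;> simp [_root_.glue, ht]
  · have key : ∀ b, _root_.glue T p q b - q T = ∫ t in T..b, _root_.glue T p' q' t := by
      intro b
      rcases lt_or_ge b T with hb | hb
      · rw [glue_lt _ _ hb, ← hT, hp.2.2 T b]
        apply intervalIntegral.integral_congr_uIoo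
        intro t ht
        rw [uIoo_of_ge hb.le] at ht
        exact (glue_lt _ _ ht.2).symm
      · rw [glue_ge _ _ hb, hq.2.2 T b]
        apply intervalIntegral.integral_congr_uIoo
        intro t ht
        rw [uIoo_of_le hb] at ht
        exact (glue_ge _ _ ht.1.le).symm
    intro a b
    rw [← intervalIntegral.integral_interval_sub_left (hi T b) (hi T a), ← key, ← key]
    abel

theorem isH1loc_affine {N : ℕ} (x v : Euc N) (T : ℝ) :
    IsH1loc (fun t => x + (t - T) • v) (fun _ => v) := by
  refine ⟨locallyIntegrable_const v, fun a b => ?_, fun a b => ?_⟩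
  · exact continuous_const.integrableOn_Icc
  · rw [intervalIntegral.integral_const]
    module

theorem isH1loc_const {N : ℕ} (x : Euc N) : IsH1loc (fun _ => x) (fun _ => (0 : Euc N)) := by
  simpa using isH1loc_affine x 0 0

theorem lag_aemeas {N : ℕ} {V : Euc N → ℝ} (hV : Continuous V) (c : ℝ) {q q' : ℝ → Euc N}
    (h : IsH1loc q q') :
    AEMeasurable (fun t => ENNReal.ofReal (2⁻¹ * ‖q' t‖ ^ 2 + (V (q t) - c))) volume := by
  have h1 : AEMeasurable (fun t => ‖q' t‖) volume := h.1.aestronglyMeasurable.norm.aemeasurable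
  have h2 : AEMeasurable (fun t => V (q t)) volume := (hV.comp h.continuous).measurable.aemeasurable
  exact (((h1.pow_const 2).const_mul _).add (h2.sub_const c)).ennreal_ofReal

theorem lagJ_Icc_lt_top {N : ℕ} {V : Euc N → ℝ} (hV : Continuous V) (c : ℝ) {q q' : ℝ → Euc N}
    (h : IsH1loc q q') (a b : ℝ) : lagJ V c q q' (Icc a b) < ⊤ := by
  have h1 : IntegrableOn (fun t => 2⁻¹ * ‖q' t‖ ^ 2 + (V (q t) - c)) (Icc a b) volume :=
    ((h.2.1 a b).const_mul _).add
      (((hV.comp h.continuous).sub continuous_const).integrableOn_Icc)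
  exact h1.lintegral_lt_top

theorem lagJ_union_le {N : ℕ} (V : Euc N → ℝ) (c : ℝ) (q q' : ℝ → Euc N) (A B : Set ℝ) :
    lagJ V c q q' (A ∪ B) ≤ lagJ V c q q' A + lagJ V c q q' B :=
  lintegral_union_le _ _ _

theorem lagJ_mono {N : ℕ} (V : Euc N → ℝ) (c : ℝ) (q q' : ℝ → Euc N) {A B : Set ℝ} (h : A ⊆ B) :
    lagJ V c q q' A ≤ lagJ V c q q' B :=
  lintegral_mono_set h

theorem lagJ_congr {N : ℕ} (V : Euc N → ℝ) (c : ℝ) {q q' p p' : ℝ → Euc N} {A : Set ℝ}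
    (hA : MeasurableSet A) (h : ∀ t ∈ A, q t = p t) (h' : ∀ t ∈ A, q' t = p' t) :
    lagJ V c q q' A = lagJ V c p p' A := by
  refine setLIntegral_congr_fun hA ?_
  intro t ht
  simp only [h t ht, h' t ht]

theorem lagJ_eq_zero {N : ℕ} (V : Euc N → ℝ) (c : ℝ) {q q' : ℝ → Euc N} {A : Set ℝ} {x : Euc N}
    (hA : MeasurableSet A) (hx : V x = c) (h : ∀ t ∈ A, q t = x) (h' : ∀ t ∈ A, q' t = 0) :
    lagJ V c q q' A = 0 := by
  rw [lagJ_congr V c (p := fun _ => x) (p' := fun _ => 0) hA h h']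
  simp [lagJ, hx]

theorem lagJ_split {N : ℕ} (V : Euc N → ℝ) (c : ℝ) (q q' : ℝ → Euc N) (T : ℝ) :
    lagJ V c q q' (Iio T) + lagJ V c q q' (Ici T) = lagJ V c q q' univ := by
  have := lintegral_add_compl (μ := volume)
    (fun t => ENNReal.ofReal (2⁻¹ * ‖q' t‖ ^ 2 + (V (q t) - c))) (measurableSet_Iio (a := T))
  rw [compl_Iio] at this
  simpa [lagJ] using this

/-- Zero action implies constancy. -/
theorem const_of_lagJ_zero {N : ℕ} {V : Euc N → ℝ} (hV : Continuous V) {c : ℝ}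
    {q q' : ℝ → Euc N} (h : IsH1loc q q') (hc : ∀ t, c ≤ V (q t)) {s t : ℝ} (hst : s ≤ t)
    (h0 : lagJ V c q q' (Ioo s t) = 0) : q s = q t := by
  have h1 := (lintegral_eq_zero_iff' (lag_aemeas hV c h).restrict).1 h0
  have h2 : ∫ u in s..t, q' u = 0 := by
    rw [intervalIntegral.integral_of_le hst, integral_Ioc_eq_integral_Ioo]
    apply integral_eq_zero_of_ae
    filter_upwards [h1] with u hu
    have h3 := ENNReal.ofReal_eq_zero.1 hu
    have h4 := hc u
    have h5 : ‖q' u‖ ^ 2 = 0 := le_antisymm (by linarith) (sq_nonneg _)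
    simpa using h5
  have h3 := h.2.2 s t
  rw [h2, sub_eq_zero] at h3
  exact h3.symm

theorem setDist_le {E : Type*} [PseudoMetricSpace E] {A B : Set E} {x y : E} (hx : x ∈ A)
    (hy : y ∈ B) : setDist A B ≤ dist x y :=
  csInf_le ⟨0, by rintro _ ⟨p, _, rfl⟩; exact dist_nonneg⟩ ⟨(x, y), ⟨hx, hy⟩, rfl⟩

theorem setDist_comm' {E : Type*} [PseudoMetricSpace E] (A B : Set E) :
    setDist A B = setDist B A := by
  unfold setDist
  congr 1
  ext r
  constructor
  · rintro ⟨⟨x, y⟩, ⟨hx, hy⟩, rfl⟩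
    exact ⟨(y, x), ⟨hy, hx⟩, dist_comm _ _⟩
  · rintro ⟨⟨x, y⟩, ⟨hx, hy⟩, rfl⟩
    exact ⟨(y, x), ⟨hy, hx⟩, dist_comm _ _⟩

theorem nonempty_of_setDist {E : Type*} [PseudoMetricSpace E] {A B : Set E}
    (h : 0 < setDist A B) : A.Nonempty ∧ B.Nonempty := by
  by_contra hh
  have : A ×ˢ B = (∅ : Set (E × E)) := by
    rw [← not_nonempty_iff_eq_empty, prod_nonempty_iff]
    exact hh
  simp [setDist, this] at h

/-- The segment from a point close to `A` to its projection on `A` stays in `{V ≥ c}`. -/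
theorem segment_ge {N : ℕ} {V : Euc N → ℝ} (hV : Continuous V) {c : ℝ} {A B : Set (Euc N)}
    (hsplit : {x | V x ≤ c} = A ∪ B) {x y : Euc N} (hx : c ≤ V x) (hy : y ∈ A)
    (hxy : infDist x A = dist x y) (hd : dist x y < setDist A B) :
    ∀ s ∈ Icc (0:ℝ) 1, c ≤ V (x + s • (y - x)) := by
  have h1 : ∀ s ∈ Ico (0:ℝ) 1, c ≤ V (x + s • (y - x)) := by
    intro s hs
    by_contra hlt
    push Not at hlt
    have hmem : x + s • (y - x) ∈ A ∪ B := by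
      rw [← hsplit]; exact hlt.le
    have hpos : 0 < dist x y := by
      rcases dist_nonneg.eq_or_lt (a := (0:ℝ)) (b := dist x y) with h0 | h0
      · have : x = y := dist_eq_zero.1 h0.symm
        subst this
        simp at hlt
        linarith
      · exact h0
    rcases hmem with hA | hB
    · have h2 := infDist_le_dist_of_mem (x := x) hA
      rw [hxy] at h2
      have h3 : dist x (x + s • (y - x)) = s * dist x y := by
        rw [dist_self_add_right, norm_smul, Real.norm_of_nonneg hs.1, dist_comm, dist_eq_norm]
      rw [h3] at h2
      nlinarith [hs.2]
    · have h2 := setDist_le hy hB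
      have h3 : dist y (x + s • (y - x)) = (1 - s) * dist x y := by
        rw [dist_eq_norm, show y - (x + s • (y - x)) = (1 - s) • (y - x) by module, norm_smul,
          Real.norm_of_nonneg (by linarith [hs.2]), dist_comm, dist_eq_norm]
      nlinarith [hs.1]
  have hcl : IsClosed {s : ℝ | c ≤ V (x + s • (y - x))} :=
    isClosed_le continuous_const (by fun_prop)
  have h2 : closure (Ico (0:ℝ) 1) ⊆ {s : ℝ | c ≤ V (x + s • (y - x))} :=
    hcl.closure_subset_iff.2 h1
  rw [closure_Ico (by norm_num)] at h2
  exact h2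

theorem mc_lt_top {N : ℕ} {V : Euc N → ℝ} (hV : Continuous V)
    {c : ℝ} {Vm Vp : Set (Euc N)} (hVm : IsClosed Vm) (hVp : IsClosed Vp)
    (hsplit : {x | V x ≤ c} = Vm ∪ Vp) (hsep : 0 < setDist Vm Vp)
    {q q' : ℝ → Euc N} (hq : (q, q') ∈ Gamma V c Vm Vp) : mc V c Vm Vp < ⊤ := by
  obtain ⟨hH, hc, hm, hp⟩ := hq
  simp only at hH hc hm hp
  obtain ⟨T1, h1, hT1⟩ := ((hm _ hsep).and_eventually (eventually_le_atBot 0)).exists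
  obtain ⟨T2, h2, hT2⟩ := ((hp _ hsep).and_eventually (eventually_ge_atTop 0)).exists
  obtain ⟨x, hx, hdx⟩ := hVm.exists_infDist_eq_dist (nonempty_of_setDist hsep).1 (q T1)
  obtain ⟨y, hy, hdy⟩ := hVp.exists_infDist_eq_dist (nonempty_of_setDist hsep).2 (q T2)
  have sx := segment_ge hV hsplit (hc T1) hx hdx (by rw [← hdx]; exact h1)
  have sy := segment_ge hV (by rw [hsplit, union_comm]) (hc T2) hy hdy
    (by rw [← hdy, setDist_comm']; exact h2)
  have hVx : V x = c := by
    apply le_antisymm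
    · have : x ∈ {x | V x ≤ c} := by rw [hsplit]; exact Or.inl hx
      exact this
    · simpa using sx 1 (by simp)
  have hVy : V y = c := by
    apply le_antisymm
    · have : y ∈ {x | V x ≤ c} := by rw [hsplit]; exact Or.inr hy
      exact this
    · simpa using sy 1 (by simp)
  -- gluing
  have g1 := (isH1loc_affine (q T2) (y - q T2) T2).glue (isH1loc_const y) (T2 + 1) (by simp)
  have g2 := hH.glue g1 T2 (by rw [glue_lt _ _ (by linarith)]; simp)
  have g3 := (isH1loc_affine (q T1) (q T1 - x) T1).glue g2 T1 (by
    rcases (hT1.trans hT2).lt_or_eq with h | h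
    · rw [glue_lt _ _ h]; simp
    · rw [glue_ge _ _ h.ge, glue_lt _ _ (by linarith)]; simp [h])
  have g4 := (isH1loc_const x).glue g3 (T1 - 1) (by rw [glue_lt _ _ (by linarith)]; simp)
  have hmem : (glue (T1 - 1) (fun _ => x)
      (glue T1 (fun t => q T1 + (t - T1) • (q T1 - x))
        (glue T2 q (glue (T2 + 1) (fun t => q T2 + (t - T2) • (y - q T2)) fun _ => y))),
    glue (T1 - 1) (fun _ => 0)
      (glue T1 (fun _ => q T1 - x) (glue T2 q' (glue (T2 + 1) (fun _ => y - q T2) fun _ => 0))))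
      ∈ Gamma V c Vm Vp := by
    refine ⟨g4, ?_, ?_, ?_⟩
    · intro t
      rcases lt_or_ge t (T1 - 1) with a | a
      · simp [glue_lt _ _ a, hVx]
      simp only [glue_ge _ _ a]
      rcases lt_or_ge t T1 with b | b
      · simp only [glue_lt _ _ b]
        convert sx (T1 - t) ⟨by linarith, by linarith⟩ using 2
        module
      simp only [glue_ge _ _ b]
      rcases lt_or_ge t T2 with d | d
      · simp only [glue_lt _ _ d]
        exact hc t
      simp only [glue_ge _ _ d]
      rcases lt_or_ge t (T2 + 1) with e | e
      · simp only [glue_lt _ _ e]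
        exact sy (t - T2) ⟨by linarith, by linarith⟩
      simp [glue_ge _ _ e, hVy]
    · intro ε hε
      apply Eventually.frequently
      filter_upwards [eventually_lt_atBot (T1 - 1)] with t ht
      simp only [glue_lt _ _ ht, infDist_zero_of_mem hx]
      exact hε
    · intro ε hε
      apply Eventually.frequently
      filter_upwards [eventually_ge_atTop (T2 + 1)] with t ht
      rw [glue_ge _ _ (by linarith), glue_ge _ _ (by linarith), glue_ge _ _ (by linarith),
        glue_ge _ _ ht, infDist_zero_of_mem hy]
      exact hε
  refine lt_of_le_of_lt (iInf₂_le _ hmem) ?_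
  have hU : (univ : Set ℝ) = Iio (T1 - 1) ∪ (Icc (T1 - 1) (T2 + 1) ∪ Ici (T2 + 1)) := by
    symm
    rw [eq_univ_iff_forall]
    intro t
    rcases lt_or_ge t (T1 - 1) with a | a
    · exact Or.inl a
    rcases le_or_gt t (T2 + 1) with b | b
    · exact Or.inr (Or.inl ⟨a, b⟩)
    · exact Or.inr (Or.inr b.le)
  rw [hU]
  refine lt_of_le_of_lt (lagJ_union_le _ _ _ _ _ _) (ENNReal.add_lt_top.2 ⟨?_, ?_⟩)
  · rw [lagJ_eq_zero V c measurableSet_Iio hVx]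
    · exact ENNReal.zero_lt_top
    · intro t ht; simp only [glue_lt _ _ (mem_Iio.1 ht)]
    · intro t ht; simp only [glue_lt _ _ (mem_Iio.1 ht)]
  refine lt_of_le_of_lt (lagJ_union_le _ _ _ _ _ _) (ENNReal.add_lt_top.2 ⟨?_, ?_⟩)
  · exact lagJ_Icc_lt_top hV c g4 _ _
  · rw [lagJ_eq_zero V c measurableSet_Ici hVy]
    · exact ENNReal.zero_lt_top
    · intro t ht
      have ht' : T2 + 1 ≤ t := ht
      simp only
      rw [glue_ge _ _ (by linarith), glue_ge _ _ (by linarith), glue_ge _ _ (by linarith),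
        glue_ge _ _ ht]
    · intro t ht
      have ht' : T2 + 1 ≤ t := ht
      simp only
      rw [glue_ge _ _ (by linarith), glue_ge _ _ (by linarith), glue_ge _ _ (by linarith),
        glue_ge _ _ ht]

theorem left_cut {N : ℕ} {V : Euc N → ℝ}
    {c : ℝ} {Vm Vp : Set (Euc N)} (hsplit : {x | V x ≤ c} = Vm ∪ Vp)
    {q q' : ℝ → Euc N} (hq : (q, q') ∈ Gamma V c Vm Vp) {T : ℝ} (hT : q T ∈ Vm) :
    mc V c Vm Vp ≤ lagJ V c q q' (Ici T) := by
  obtain ⟨hH, hc, hm, hp⟩ := hq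
  simp only at hH hc hm hp
  have hVx : V (q T) = c := by
    refine le_antisymm ?_ (hc T)
    have : q T ∈ {x | V x ≤ c} := by rw [hsplit]; exact Or.inl hT
    exact this
  have g := (isH1loc_const (q T)).glue hH T rfl
  have hmem : (glue T (fun _ => q T) q, glue T (fun _ => 0) q') ∈ Gamma V c Vm Vp := by
    refine ⟨g, ?_, ?_, ?_⟩
    · intro t
      rcases lt_or_ge t T with a | a
      · simp only [glue_lt _ _ a]; exact hc T
      · simp only [glue_ge _ _ a]; exact hc t
    · intro ε hε
      apply Eventually.frequently
      filter_upwards [eventually_lt_atBot T] with t ht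
      simp only [glue_lt _ _ ht, infDist_zero_of_mem hT]
      exact hε
    · intro ε hε
      refine ((hp ε hε).and_eventually (eventually_ge_atTop T)).mono ?_
      rintro t ⟨h1, h2⟩
      simp only [glue_ge _ _ h2]
      exact h1
  refine (iInf₂_le _ hmem).trans ?_
  rw [← lagJ_split V c _ _ T, lagJ_eq_zero V c (A := Iio T) measurableSet_Iio hVx
    (fun t ht => by simp only [glue_lt _ _ (mem_Iio.1 ht)])
    (fun t ht => by simp only [glue_lt _ _ (mem_Iio.1 ht)]), zero_add]
  refine (lagJ_congr V c measurableSet_Ici ?_ ?_).le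
  · intro t ht
    simp only [glue_ge _ _ (mem_Ici.1 ht)]
  · intro t ht
    simp only [glue_ge _ _ (mem_Ici.1 ht)]

theorem right_cut {N : ℕ} {V : Euc N → ℝ}
    {c : ℝ} {Vm Vp : Set (Euc N)} (hsplit : {x | V x ≤ c} = Vm ∪ Vp)
    {q q' : ℝ → Euc N} (hq : (q, q') ∈ Gamma V c Vm Vp) {T : ℝ} (hT : q T ∈ Vp) :
    mc V c Vm Vp ≤ lagJ V c q q' (Iio T) := by
  obtain ⟨hH, hc, hm, hp⟩ := hq
  simp only at hH hc hm hp
  have hVx : V (q T) = c := by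
    refine le_antisymm ?_ (hc T)
    have : q T ∈ {x | V x ≤ c} := by rw [hsplit]; exact Or.inr hT
    exact this
  have g := hH.glue (isH1loc_const (q T)) T rfl
  have hmem : (glue T q fun _ => q T, glue T q' fun _ => 0) ∈ Gamma V c Vm Vp := by
    refine ⟨g, ?_, ?_, ?_⟩
    · intro t
      rcases lt_or_ge t T with a | a
      · simp only [glue_lt _ _ a]; exact hc t
      · simp only [glue_ge _ _ a]; exact hc T
    · intro ε hε
      refine ((hm ε hε).and_eventually (eventually_lt_atBot T)).mono ?_
      rintro t ⟨h1, h2⟩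
      simp only [glue_lt _ _ h2]
      exact h1
    · intro ε hε
      apply Eventually.frequently
      filter_upwards [eventually_ge_atTop T] with t ht
      simp only [glue_ge _ _ ht, infDist_zero_of_mem hT]
      exact hε
  refine (iInf₂_le _ hmem).trans ?_
  rw [← lagJ_split V c _ _ T, lagJ_eq_zero V c (A := Ici T) measurableSet_Ici hVx
    (fun t ht => by simp only [glue_ge _ _ (mem_Ici.1 ht)])
    (fun t ht => by simp only [glue_ge _ _ (mem_Ici.1 ht)]), add_zero]
  refine (lagJ_congr V c measurableSet_Iio ?_ ?_).le
  · intro t ht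
    simp only [glue_lt _ _ (mem_Iio.1 ht)]
  · intro t ht
    simp only [glue_lt _ _ (mem_Iio.1 ht)]

theorem mem_of_infDist_small {E : Type*} [PseudoMetricSpace E] {A : Set E} (hA : IsClosed A)
    (hne : A.Nonempty) {x : E} (h : ∀ ε > 0, infDist x A < ε) : x ∈ A := by
  rw [hA.mem_iff_infDist_zero hne]
  exact le_antisymm (le_of_forall_pos_le_add fun ε hε => by linarith [h ε hε]) infDist_nonneg

/-- Lemma 2.7: the whole action of a minimizer is carried by `(α_q, ω_q)`, and the
minimizer is constant before `α_q` and after `ω_q` (when these are finite). -/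
theorem minimizer_action_on_interval {N : ℕ} (hN : 0 < N) (V : Euc N → ℝ) (hV : ContDiff ℝ 1 V)
    (c : ℝ) (Vm Vp : Set (Euc N)) (hVm : IsClosed Vm) (hVp : IsClosed Vp)
    (hsplit : {x | V x ≤ c} = Vm ∪ Vp) (hsep : 0 < setDist Vm Vp)
    (R : ℝ) (hR : 0 < R) (hcoer : Coercive V c Vm Vp R)
    (q q' : ℝ → Euc N) (hq : MemM V c Vm Vp R q q') :
    lagJ V c q q' {t : ℝ | alphaQ Vm q < (t : EReal) ∧ (t : EReal) < omegaQ Vm Vp q}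
      = mc V c Vm Vp ∧
    (∀ a : ℝ, alphaQ Vm q = (a : EReal) → ∀ t, t ≤ a → q t = q a) ∧
    (∀ b : ℝ, omegaQ Vm Vp q = (b : EReal) → ∀ t, b ≤ t → q t = q b) := by
  obtain ⟨hG, -, hmin, -⟩ := hq
  have hVc : Continuous V := hV.continuous
  have hfin := mc_lt_top hVc hVm hVp hsplit hsep hG
  have hH : IsH1loc q q' := hG.1
  have hc : ∀ t, c ≤ V (q t) := hG.2.1
  have hcont : Continuous q := hH.continuous
  have hdisj : ∀ x, x ∈ Vm → x ∈ Vp → False := by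
    intro x h1 h2
    have := setDist_le h1 h2
    rw [dist_self] at this
    linarith
  have hne := nonempty_of_setDist hsep
  -- zero action before a visit to `Vm`
  have zl : ∀ T, q T ∈ Vm → lagJ V c q q' (Iio T) = 0 := by
    intro T hT
    have h1 := left_cut hsplit hG hT
    have h2 := lagJ_split V c q q' T
    rw [hmin] at h2
    have h3 : lagJ V c q q' (Ici T) ≠ ⊤ := by
      refine ne_top_of_le_ne_top hfin.ne ?_
      rw [← h2]; exact le_add_self
    have h4 : lagJ V c q q' (Iio T) + lagJ V c q q' (Ici T) ≤ 0 + lagJ V c q q' (Ici T) := by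
      rw [h2, zero_add]; exact h1
    exact le_antisymm ((ENNReal.add_le_add_iff_right h3).1 h4) bot_le
  have zr : ∀ T, q T ∈ Vp → lagJ V c q q' (Ici T) = 0 := by
    intro T hT
    have h1 := right_cut hsplit hG hT
    have h2 := lagJ_split V c q q' T
    rw [hmin] at h2
    have h3 : lagJ V c q q' (Iio T) ≠ ⊤ := by
      refine ne_top_of_le_ne_top hfin.ne ?_
      rw [← h2]; exact le_self_add
    have h4 : lagJ V c q q' (Iio T) + lagJ V c q q' (Ici T) ≤ lagJ V c q q' (Iio T) + 0 := by
      rw [h2, add_zero]; exact h1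
    exact le_antisymm ((ENNReal.add_le_add_iff_left h3).1 h4) bot_le
  have cl : ∀ T, q T ∈ Vm → ∀ t, t ≤ T → q t = q T := by
    intro T hT t ht
    refine const_of_lagJ_zero hVc hH hc ht (le_antisymm ?_ bot_le)
    rw [← zl T hT]
    exact lagJ_mono _ _ _ _ (fun u hu => hu.2)
  have cr : ∀ T, q T ∈ Vp → ∀ t, T ≤ t → q t = q T := by
    intro T hT t ht
    refine (const_of_lagJ_zero hVc hH hc ht (le_antisymm ?_ bot_le)).symm
    rw [← zr T hT]
    exact lagJ_mono _ _ _ _ (fun u hu => hu.1.le)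
  have hα : ∀ a : ℝ, alphaQ Vm q = (a : EReal) → q a ∈ Vm := by
    intro a ha
    have hcl : IsClosed (q ⁻¹' Vm) := hVm.preimage hcont
    change a ∈ q ⁻¹' Vm
    rw [← hcl.closure_eq, Metric.mem_closure_iff]
    intro ε hε
    have h1 : ((a - ε : ℝ) : EReal) < alphaQ Vm q := by
      rw [ha]; exact EReal.coe_lt_coe_iff.2 (by linarith)
    obtain ⟨_, ⟨t, rfl, ht⟩, hlt⟩ := lt_sSup_iff.1 h1
    have h2 : (t : EReal) ≤ alphaQ Vm q := le_sSup ⟨t, rfl, ht⟩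
    rw [ha] at h2
    have h3 := EReal.coe_le_coe_iff.1 h2
    have h4 := EReal.coe_lt_coe_iff.1 hlt
    refine ⟨t, ht, ?_⟩
    rw [Real.dist_eq, abs_lt]
    constructor <;> linarith
  have hω : ∀ b : ℝ, omegaQ Vm Vp q = (b : EReal) → q b ∈ Vp := by
    intro b hb
    have hcl : IsClosed (q ⁻¹' Vp) := hVp.preimage hcont
    change b ∈ q ⁻¹' Vp
    rw [← hcl.closure_eq, Metric.mem_closure_iff]
    intro ε hε
    have h1 : omegaQ Vm Vp q < ((b + ε : ℝ) : EReal) := by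
      rw [hb]; exact EReal.coe_lt_coe_iff.2 (by linarith)
    obtain ⟨_, ⟨t, rfl, hat, ht⟩, hlt⟩ := sInf_lt_iff.1 h1
    have h2 : omegaQ Vm Vp q ≤ (t : EReal) := sInf_le ⟨t, rfl, hat, ht⟩
    rw [hb] at h2
    have h3 := EReal.coe_le_coe_iff.1 h2
    have h4 := EReal.coe_lt_coe_iff.1 hlt
    refine ⟨t, ht, ?_⟩
    rw [Real.dist_eq, abs_lt]
    constructor <;> linarith
  have hα_top : alphaQ Vm q ≠ ⊤ := by
    intro htop
    have hex : ∀ r : ℝ, ∃ T, r < T ∧ q T ∈ Vm := by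
      intro r
      have h1 : ((r : ℝ) : EReal) < alphaQ Vm q := by rw [htop]; exact EReal.coe_lt_top r
      obtain ⟨_, ⟨t, rfl, ht⟩, hlt⟩ := lt_sSup_iff.1 h1
      exact ⟨t, EReal.coe_lt_coe_iff.1 hlt, ht⟩
    obtain ⟨T0, -, hT0⟩ := hex 0
    have hcst : ∀ t, q t = q T0 := by
      intro t
      obtain ⟨T, hT, hTm⟩ := hex (max t T0)
      rw [cl T hTm t ((le_max_left _ _).trans hT.le), cl T hTm T0 ((le_max_right _ _).trans hT.le)]
    refine hdisj _ hT0 (mem_of_infDist_small hVp hne.2 fun ε hε => ?_)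
    obtain ⟨t, ht⟩ := (hG.2.2.2 ε hε).exists
    rw [← hcst t]
    exact ht
  have hω_bot : omegaQ Vm Vp q ≠ ⊥ := by
    intro hbot
    have hex : ∀ r : ℝ, ∃ T, T < r ∧ q T ∈ Vp := by
      intro r
      have h1 : omegaQ Vm Vp q < ((r : ℝ) : EReal) := by rw [hbot]; exact EReal.bot_lt_coe r
      obtain ⟨_, ⟨t, rfl, -, ht⟩, hlt⟩ := sInf_lt_iff.1 h1
      exact ⟨t, EReal.coe_lt_coe_iff.1 hlt, ht⟩
    obtain ⟨T0, -, hT0⟩ := hex 0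
    have hcst : ∀ t, q t = q T0 := by
      intro t
      obtain ⟨T, hT, hTm⟩ := hex (min t T0)
      rw [cr T hTm t (hT.le.trans (min_le_left _ _)), cr T hTm T0 (hT.le.trans (min_le_right _ _))]
    refine hdisj _ (mem_of_infDist_small hVm hne.1 fun ε hε => ?_) hT0
    obtain ⟨t, ht⟩ := (hG.2.2.1 ε hε).exists
    rw [← hcst t]
    exact ht
  refine ⟨?_, fun a ha => cl a (hα a ha), fun b hb => cr b (hω b hb)⟩
  have e1 : lagJ V c q q' {t : ℝ | (t : EReal) ≤ alphaQ Vm q} = 0 := by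
    induction hA : alphaQ Vm q with
    | bot => simp [lagJ]
    | top => exact absurd hA hα_top
    | coe a =>
      have : {t : ℝ | (t : EReal) ≤ (a : EReal)} = Iic a := by
        ext t; simp
      rw [this, ← zl a (hα a hA)]
      exact setLIntegral_congr Iio_ae_eq_Iic.symm
  have e2 : lagJ V c q q' {t : ℝ | omegaQ Vm Vp q ≤ (t : EReal)} = 0 := by
    induction hA : omegaQ Vm Vp q with
    | bot => exact absurd hA hω_bot
    | top => simp [lagJ]
    | coe b =>
      have : {t : ℝ | (b : EReal) ≤ (t : EReal)} = Ici b := by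
        ext t; simp
      rw [this, ← zr b (hω b hA)]
  rw [← hmin]
  refine le_antisymm (lagJ_mono _ _ _ _ (subset_univ _)) ?_
  have hU : (univ : Set ℝ) = {t : ℝ | alphaQ Vm q < (t : EReal) ∧ (t : EReal) < omegaQ Vm Vp q} ∪
      ({t : ℝ | (t : EReal) ≤ alphaQ Vm q} ∪ {t : ℝ | omegaQ Vm Vp q ≤ (t : EReal)}) := by
    symm
    rw [eq_univ_iff_forall]
    intro t
    rcases lt_or_ge (alphaQ Vm q) (t : EReal) with a | a
    · rcases lt_or_ge (t : EReal) (omegaQ Vm Vp q) with b | b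
      · exact Or.inl ⟨a, b⟩
      · exact Or.inr (Or.inr b)
    · exact Or.inr (Or.inl a)
  rw [hU]
  refine (lagJ_union_le _ _ _ _ _ _).trans ?_
  have e3 := lagJ_union_le V c q q' {t : ℝ | (t : EReal) ≤ alphaQ Vm q}
    {t : ℝ | omegaQ Vm Vp q ≤ (t : EReal)}
  rw [e1, e2, add_zero] at e3
  rw [le_antisymm e3 bot_le, add_zero]
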